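/- Let A be a finite Boolean algebra, ≤' a linear order on the set of atoms of A, and ⊑ the natural order on A induced by ≤'. Let B be a Boolean subalgebra of A. The restriction of ⊑ to the set of atoms of B (elements a ∈ B, a ≠ ⊥, such that every b ∈ B with b ≤ a equals ⊥ or a) is a linear order on the atoms of B; let ⊑_B denote the natural order on the Boolean algebra B induced by this linear order on the atoms of B. Then ⊑_B coincides with the restriction of ⊑ to B: for all x, y ∈ B, x ⊑_B y if and only if x ⊑ y. -/

import Mathlib

/-- A Boolean subalgebra of a Boolean algebra, i.e. a subset containing `⊥` and `⊤` and
closed under `⊓`, `⊔`, and complement. -/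
def IsBoolSubalg {A : Type*} [BooleanAlgebra A] (B : Set A) : Prop :=
  ⊥ ∈ B ∧ ⊤ ∈ B ∧ (∀ x ∈ B, ∀ y ∈ B, x ⊓ y ∈ B) ∧ (∀ x ∈ B, ∀ y ∈ B, x ⊔ y ∈ B) ∧
    ∀ x ∈ B, xᶜ ∈ B

/-- `a` is an atom of the Boolean subalgebra `B`: it belongs to `B`, is nonzero, and every
element of `B` below it is `⊥` or `a` itself. -/
def IsAtomOfSet {A : Type*} [BooleanAlgebra A] (B : Set A) (a : A) : Prop :=
  a ∈ B ∧ a ≠ ⊥ ∧ ∀ b ∈ B, b ≤ a → b = ⊥ ∨ b = a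

/-- The natural order on a (finite) Boolean algebra `A` induced by a linear order `r` on the set
of atoms of `A`: `x ⊑ y` iff `At(x) ≤ At(y)` in the colexicographic order, i.e. `x = y` or the
`r`-greatest atom lying below exactly one of `x` and `y` lies below `y`. -/
def natOrder {A : Type*} [BooleanAlgebra A]
    (r : {a : A // IsAtom a} → {a : A // IsAtom a} → Prop) (x y : A) : Prop :=
  x = y ∨ ∃ a : {a : A // IsAtom a}, a.val ≤ y ∧ ¬ a.val ≤ x ∧
    ∀ b : {a : A // IsAtom a}, ¬ (b.val ≤ x ↔ b.val ≤ y) → r b a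

/-- The natural order on a (finite) Boolean subalgebra `B` of `A` induced by a linear order `r'`
on the set of atoms of `B`: `x ⊑_B y` iff `x = y` or the `r'`-greatest atom of `B` lying below
exactly one of `x` and `y` lies below `y`. -/
def natOrderOn {A : Type*} [BooleanAlgebra A] (B : Set A) (r' : A → A → Prop) (x y : A) : Prop :=
  x = y ∨ ∃ a, IsAtomOfSet B a ∧ a ≤ y ∧ ¬ a ≤ x ∧
    ∀ b, IsAtomOfSet B b → ¬ (b ≤ x ↔ b ≤ y) → r' b a

section helpers
variable {A : Type*} [BooleanAlgebra A]

lemma aux_le [Finite A] {x y : A} (h : ∀ a : A, IsAtom a → a ≤ x → a ≤ y) : x ≤ y := by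
  rcases IsAtomic.eq_bot_or_exists_atom_le (x \ y) with h' | ⟨a, ha, hle⟩
  · exact sdiff_eq_bot_iff.1 h'
  · have h1 : a ≤ y := h a ha (hle.trans sdiff_le)
    exact absurd (le_bot_iff.1 (disjoint_sdiff_self_left hle h1)) ha.1

lemma aux_ext [Finite A] {x y : A} (h : ∀ b : {a : A // IsAtom a}, b.val ≤ x ↔ b.val ≤ y) :
    x = y :=
  le_antisymm (aux_le fun a ha hx => (h ⟨a, ha⟩).1 hx)
    (aux_le fun a ha hx => (h ⟨a, ha⟩).2 hx)

lemma aux_antisymm {r : {a : A // IsAtom a} → {a : A // IsAtom a} → Prop}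
    (hr : IsLinearOrder {a : A // IsAtom a} r) {x y : A}
    (h1 : natOrder r x y) (h2 : natOrder r y x) : x = y := by
  rcases h1 with h1 | ⟨a, ha, ha', hA⟩
  · exact h1
  rcases h2 with h2 | ⟨b, hb, hb', hB⟩
  · exact h2.symm
  have e : a = b := hr.antisymm _ _ (hB a (by tauto)) (hA b (by tauto))
  subst e
  exact absurd ha hb'

lemma aux_trans {r : {a : A // IsAtom a} → {a : A // IsAtom a} → Prop}
    (hr : IsLinearOrder {a : A // IsAtom a} r) {x y z : A}
    (h1 : natOrder r x y) (h2 : natOrder r y z) : natOrder r x z := by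
  rcases h1 with rfl | ⟨a, ha, ha', hA⟩
  · exact h2
  rcases h2 with rfl | ⟨b, hb, hb', hB⟩
  · exact Or.inr ⟨a, ha, ha', hA⟩
  rcases hr.total a b with h | h
  · refine Or.inr ⟨b, hb, fun hx => ?_, fun c hc => ?_⟩
    · have e : a = b := hr.antisymm _ _ h (hA b (by tauto))
      subst e
      exact hb' ha
    · by_cases hxy : c.val ≤ x ↔ c.val ≤ y
      · exact hB c (by tauto)
      · exact hr.trans _ _ _ (hA c hxy) h
  · refine Or.inr ⟨a, ?_, ha', fun c hc => ?_⟩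
    · by_contra hz
      have e : a = b := hr.antisymm _ _ (hB a (by tauto)) h
      subst e
      exact hb' ha
    · by_cases hxy : c.val ≤ x ↔ c.val ≤ y
      · exact hr.trans _ _ _ (hB c (by tauto)) h
      · exact hA c hxy

lemma aux_total [Finite A] {r : {a : A // IsAtom a} → {a : A // IsAtom a} → Prop}
    (hr : IsLinearOrder {a : A // IsAtom a} r) (x y : A) :
    natOrder r x y ∨ natOrder r y x := by
  by_cases hxy : x = y
  · exact Or.inl (Or.inl hxy)
  have hne : ∃ b : {a : A // IsAtom a}, ¬ (b.val ≤ x ↔ b.val ≤ y) := by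
    by_contra h
    push Not at h
    exact hxy (aux_ext fun b => by have := h b; tauto)
  let s : {a : A // IsAtom a} → {a : A // IsAtom a} → Prop := fun a b => r b a ∧ a ≠ b
  have : IsTrans _ s := ⟨fun a b c h1 h2 => ⟨hr.trans _ _ _ h2.1 h1.1, fun e => by
    subst e
    exact h1.2 (hr.antisymm _ _ h2.1 h1.1)⟩⟩
  have : Std.Irrefl s := ⟨fun a h => h.2 rfl⟩
  have wf : WellFounded s := Finite.wellFounded_of_trans_of_irrefl s
  obtain ⟨m, hm, hmin⟩ := wf.has_min {b | ¬ (b.val ≤ x ↔ b.val ≤ y)} hne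
  have hmax : ∀ b : {a : A // IsAtom a}, ¬ (b.val ≤ x ↔ b.val ≤ y) → r b m := by
    intro b hb
    rcases hr.total b m with h | h
    · exact h
    · by_cases e : b = m
      · subst e
        exact h
      · exact absurd ⟨h, e⟩ (hmin b hb)
  have hm' : ¬ (m.val ≤ x ↔ m.val ≤ y) := hm
  by_cases hy : m.val ≤ y
  · exact Or.inl (Or.inr ⟨m, hy, by tauto, hmax⟩)
  · exact Or.inr (Or.inr ⟨m, by tauto, hy, fun b hb => hmax b (by tauto)⟩)

lemma aux_disj {B : Set A} (hB : IsBoolSubalg B) {b x : A} (hb : IsAtomOfSet B b) (hx : x ∈ B)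
    (h : ¬ b ≤ x) : b ⊓ x = ⊥ := by
  rcases hb.2.2 (b ⊓ x) (hB.2.2.1 _ hb.1 _ hx) inf_le_left with h' | h'
  · exact h'
  · exact absurd (inf_eq_left.1 h') h

lemma aux_exists [Finite A] {B : Set A} (hB : IsBoolSubalg B) {a : A} (ha : IsAtom a) :
    ∃ p, IsAtomOfSet B p ∧ a ≤ p := by
  obtain ⟨p, hp⟩ := (Set.toFinite {p | p ∈ B ∧ a ≤ p}).exists_minimal ⟨⊤, hB.2.1, le_top⟩
  refine ⟨p, ⟨hp.1.1, ?_, fun b hb hbp => ?_⟩, hp.1.2⟩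
  · intro e
    exact ha.1 (le_bot_iff.1 (e ▸ hp.1.2))
  · by_cases hab : a ≤ b
    · exact Or.inr (le_antisymm hbp (hp.2 ⟨hb, hab⟩ hbp))
    · left
      have h1 : a ≤ bᶜ := by
        rw [le_compl_iff_disjoint_right]
        exact (ha.not_le_iff_disjoint).1 hab
      have h2 : p ≤ p ⊓ bᶜ :=
        hp.2 ⟨hB.2.2.1 _ hp.1.1 _ (hB.2.2.2.2 _ hb), le_inf hp.1.2 h1⟩ inf_le_left
      have h3 : b ≤ bᶜ := hbp.trans (h2.trans inf_le_right)
      exact le_compl_self.1 h3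

lemma aux_main [Finite A] {r : {a : A // IsAtom a} → {a : A // IsAtom a} → Prop}
    {B : Set A} (hB : IsBoolSubalg B) {x y : A}
    (hx : x ∈ B) (hy : y ∈ B) (h : natOrder r x y) : natOrderOn B (natOrder r) x y := by
  rcases h with h | ⟨a, hay, hax, hmax⟩
  · exact Or.inl h
  obtain ⟨p, hp, hap⟩ := aux_exists hB a.2
  have key : ∀ {c u v : A}, IsAtom c → c ≤ u → c ≤ v → u ⊓ v = ⊥ → False :=
    fun hc h1 h2 e => hc.1 (le_bot_iff.1 (e ▸ le_inf h1 h2))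
  have hpy : p ≤ y := by
    by_contra h
    exact key a.2 hap hay (aux_disj hB hp hy h)
  have hpx : ¬ p ≤ x := fun h => hax (hap.trans h)
  refine Or.inr ⟨p, hp, hpy, hpx, fun b hb hbd => ?_⟩
  by_cases e : b = p
  · exact Or.inl e
  have hbp : ¬ b ≤ p := fun h => (hp.2.2 b hb.1 h).elim hb.2.1 e
  refine Or.inr ⟨a, hap, fun h => key a.2 h hap (aux_disj hB hb hp.1 hbp), fun c hc => hmax c ?_⟩
  by_cases hcp : c.val ≤ p
  · intro hi
    exact key c.2 hcp (hi.2 (hcp.trans hpy)) (aux_disj hB hp hx hpx)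
  · have hcb : c.val ≤ b := by tauto
    intro hi
    by_cases hbx : b ≤ x
    · exact key c.2 hcb (hi.1 (hcb.trans hbx)) (aux_disj hB hb hy (by tauto))
    · exact key c.2 hcb (hi.2 (hcb.trans (by tauto))) (aux_disj hB hb hx hbx)

end helpers

/-- Let `A` be a finite Boolean algebra with a linear order `r` on its atoms, inducing the
natural order `natOrder r` on `A`, and let `B` be a Boolean subalgebra of `A`. Then the
restriction of `natOrder r` to the atoms of `B` is a linear order on the atoms of `B`, and the
natural order on `B` induced by it coincides with the restriction of `natOrder r` to `B`. -/
theorem natOrder_restricts_to_subalgebra {A : Type*} [BooleanAlgebra A] [Fintype A]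
    (r : {a : A // IsAtom a} → {a : A // IsAtom a} → Prop)
    (hr : IsLinearOrder {a : A // IsAtom a} r)
    (B : Set A) (hB : IsBoolSubalg B) :
    IsLinearOrder {a : A // IsAtomOfSet B a} (fun a b => natOrder r a.val b.val) ∧
    ∀ x ∈ B, ∀ y ∈ B, natOrderOn B (natOrder r) x y ↔ natOrder r x y := by
  refine ⟨?_, fun x hx y hy => ⟨fun h => ?_, aux_main hB hx hy⟩⟩
  · exact
      { refl := fun a => Or.inl rfl
        trans := fun a b c h1 h2 => aux_trans hr h1 h2
        antisymm := fun a b h1 h2 => Subtype.ext (aux_antisymm hr h1 h2)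
        total := fun a b => aux_total hr a.val b.val }
  · rcases aux_total hr x y with h' | h'
    · exact h'
    rcases h with h | ⟨a, ha, hay, hax, hA⟩
    · exact Or.inl h
    rcases aux_main hB hy hx h' with h | ⟨b, hb, hbx, hby, hB'⟩
    · exact Or.inl h.symm
    have e : a = b := aux_antisymm hr (hB' a ha (by tauto)) (hA b hb (by tauto))
    subst e
    exact absurd hay hby
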